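/- There exists a dense Gδ subset R of P([0,1]^d) (with the weak topology) such that for every measure μ ∈ R, the set E_μ(0) = { x ∈ [0,1]^d : h_μ(x) = 0 } is uncountable and dim_H E_μ(0) = 0. -/

import Mathlib

open MeasureTheory Metric Filter Set
open scoped ENNReal NNReal Topology

noncomputable section

/-- The unit cube `[0,1]^d` of `ℝ^d` equipped with the supremum metric,
viewed as a (compact) metric space. -/
abbrev Cube (d : ℕ) : Type := ↥(Set.Icc (0 : Fin d → ℝ) 1)

/-- The local (lower) dimension `h_μ(x) = liminf_{r → 0⁺} log μ(B(x,r)) / log r`. -/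
noncomputable def locDim {d : ℕ} (μ : Measure (Cube d)) (x : Cube d) : EReal :=
  Filter.liminf
    (fun r : ℝ => ENNReal.log (μ (Metric.ball x r)) / (Real.log r : EReal))
    (nhdsWithin 0 (Set.Ioi 0))

/-- The level set `E_μ(h) = {x : h_μ(x) = h}`. -/
def levelSet {d : ℕ} (μ : Measure (Cube d)) (h : ℝ) : Set (Cube d) :=
  {x | locDim μ x = (h : EReal)}

/-- The dyadic cube `I_{j,k} = ∏ᵢ [kᵢ 2^{-j}, (kᵢ+1) 2^{-j})`, as a subset of the cube. -/
def dyadicCube (d j : ℕ) (k : Fin d → Fin (2 ^ j)) : Set (Cube d) :=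
  {x | ∀ i, (k i : ℝ) / 2 ^ j ≤ (x : Fin d → ℝ) i ∧ (x : Fin d → ℝ) i < ((k i : ℝ) + 1) / 2 ^ j}

/-- `s_j(q) = Σ_{Q ∈ G_j, μ(Q) ≠ 0} μ(Q)^q`. -/
def dyadicSum {d : ℕ} (μ : Measure (Cube d)) (q : ℝ) (j : ℕ) : ℝ :=
  ∑ k ∈ Finset.univ.filter (fun k : Fin d → Fin (2 ^ j) => μ (dyadicCube d j k) ≠ 0),
    (μ (dyadicCube d j k)).toReal ^ q

/-- The `L^q`-spectrum `τ_μ(q) = liminf_j -(1/j) log₂ s_j(q)`. -/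
def lqSpectrum {d : ℕ} (μ : Measure (Cube d)) (q : ℝ) : EReal :=
  Filter.liminf
    (fun j : ℕ => ((-(1 / (j : ℝ)) * Real.logb 2 (dyadicSum μ q j) : ℝ) : EReal))
    Filter.atTop


/-! ### The weak topology on probability measures -/

section WeakTopology

variable {X : Type*} [MetricSpace X] [MeasurableSpace X] [BorelSpace X]

theorem isOpen_setOf_lt_measure_of_isOpen {G : Set X} (hG : IsOpen G) (c : ℝ≥0∞) :
    IsOpen {μ : ProbabilityMeasure X | c < (μ : Measure X) G} := by
  refine isOpen_iff_eventually.2 fun μ (hμ : c < (μ : Measure X) G) => ?_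
  exact eventually_lt_of_lt_liminf (hμ.trans_le
    (ProbabilityMeasure.le_liminf_measure_open_of_tendsto (tendsto_id (x := 𝓝 μ)) hG))

theorem isOpen_setOf_measure_lt_of_isClosed {F : Set X} (hF : IsClosed F) (c : ℝ≥0∞) :
    IsOpen {μ : ProbabilityMeasure X | (μ : Measure X) F < c} := by
  refine isOpen_iff_eventually.2 fun μ (hμ : (μ : Measure X) F < c) => ?_
  exact eventually_lt_of_limsup_lt ((ProbabilityMeasure.limsup_measure_closed_le_of_tendsto
    (tendsto_id (x := 𝓝 μ)) hF).trans_lt hμ)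

/-- Pointwise convergence of random variables implies weak convergence of their laws. -/
theorem tendsto_probabilityMeasure_map {Ω : Type*} [MeasurableSpace Ω] (P : ProbabilityMeasure Ω)
    {f : ℕ → Ω → X} {g : Ω → X} (hf : ∀ n, Measurable (f n)) (hg : Measurable g)
    (hfg : ∀ ω, Tendsto (fun n => f n ω) atTop (𝓝 (g ω))) :
    Tendsto (fun n => P.map (hf n).aemeasurable) atTop (𝓝 (P.map hg.aemeasurable)) := by
  rw [ProbabilityMeasure.tendsto_iff_forall_integral_tendsto]
  intro φ
  simp only [ProbabilityMeasure.toMeasure_map]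
  rw [integral_map hg.aemeasurable φ.continuous.measurable.aestronglyMeasurable]
  simp_rw [fun n => integral_map (μ := (P : Measure Ω)) (hf n).aemeasurable
    φ.continuous.measurable.aestronglyMeasurable]
  refine tendsto_integral_of_dominated_convergence (fun _ => ‖φ‖)
    (fun n => (φ.continuous.measurable.comp (hf n)).aestronglyMeasurable)
    (integrable_const _) (fun n => .of_forall fun ω => φ.norm_coe_le_norm _)
    (.of_forall fun ω => (φ.continuous.tendsto _).comp (hfg ω))

/-- The measures with little mass outside finitely many small balls of large relative mass. -/
def concentratedMeasures (X : Type*) [MetricSpace X] [MeasurableSpace X] (s δ : ℝ)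
    (ε : ℝ≥0∞) : Set (ProbabilityMeasure X) :=
  {μ | ∃ F : Finset X, ∃ r ∈ Ioo 0 δ,
    (∀ x ∈ F, ENNReal.ofReal r ^ s < (μ : Measure X) (ball x (r / 2))) ∧
      (μ : Measure X) (⋃ x ∈ F, ball x (r / 2))ᶜ < ε}

theorem isOpen_concentratedMeasures (s δ : ℝ) (ε : ℝ≥0∞) :
    IsOpen (concentratedMeasures X s δ ε) := by
  refine isOpen_iff_eventually.2 fun μ ⟨F, r, hr, h₁, h₂⟩ => ?_
  have h₁' := (Filter.eventually_all_finset F).2 fun x hx =>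
    (isOpen_setOf_lt_measure_of_isOpen (isOpen_ball (x := x) (ε := r / 2)) _).eventually_mem
      (h₁ x hx)
  have h₂' := (isOpen_setOf_measure_lt_of_isClosed
    (isOpen_biUnion fun x (_ : x ∈ F) => isOpen_ball (x := x) (ε := r / 2)).isClosed_compl
      ε).eventually_mem h₂
  filter_upwards [h₁', h₂'] with ν hν₁ hν₂
  exact ⟨F, r, hr, hν₁, hν₂⟩

theorem mem_concentratedMeasures_of_measure_compl_finset_eq_zero {X : Type*} [MetricSpace X]
    [MeasurableSpace X] {μ : ProbabilityMeasure X}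
    {F : Finset X} (hF : (μ : Measure X) (F : Set X)ᶜ = 0) {s δ : ℝ} {ε : ℝ≥0∞}
    (hs : 0 < s) (hδ : 0 < δ) (hε : 0 < ε) : μ ∈ concentratedMeasures X s δ ε := by
  classical
  have hlim : Tendsto (fun r : ℝ => ENNReal.ofReal r ^ s) (𝓝[>] 0) (𝓝 0) := by
    have h : Continuous fun r : ℝ => ENNReal.ofReal r ^ s :=
      (ENNReal.continuous_rpow_const).comp ENNReal.continuous_ofReal
    simpa [hs] using (h.tendsto 0).mono_left nhdsWithin_le_nhds
  let A := F.filter fun x => (μ : Measure X) {x} ≠ 0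
  obtain ⟨r, hrA, hr⟩ := (((Filter.eventually_all_finset A).2 fun x hx =>
    hlim.eventually_lt_const (pos_iff_ne_zero.2 (Finset.mem_filter.1 hx).2)).and
      (Ioo_mem_nhdsGT hδ)).exists
  refine ⟨A, r, hr, fun x hx => (hrA x hx).trans_le (measure_mono ?_), ?_⟩
  · simpa using hr.1
  · refine lt_of_eq_of_lt ?_ hε
    refine measure_mono_null (t := (F : Set X)ᶜ ∪
      ⋃ x ∈ F.filter fun x => (μ : Measure X) {x} = 0, {x}) ?_ ?_
    · intro x hx
      by_cases hxF : x ∈ F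
      · right
        have : x ∉ A := fun hxA => hx (mem_biUnion hxA (mem_ball_self (half_pos hr.1)))
        simp only [A, Finset.mem_filter, not_and, not_not] at this
        exact mem_biUnion (Finset.mem_filter.2 ⟨hxF, this hxF⟩) rfl
      · exact Or.inl hxF
    · rw [measure_union_null_iff]
      refine ⟨hF, (measure_biUnion_null_iff (Finset.countable_toSet _)).2 fun x hx => ?_⟩
      exact (Finset.mem_filter.1 hx).2

theorem dense_concentratedMeasures [SecondCountableTopology X] {s δ : ℝ} {ε : ℝ≥0∞}
    (hs : 0 < s) (hδ : 0 < δ) (hε : 0 < ε) : Dense (concentratedMeasures X s δ ε) := by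
  intro μ
  obtain ⟨x₀⟩ : Nonempty X := (μ : Measure X).nonempty_of_neZero
  let f : ℕ → SimpleFunc X X := SimpleFunc.approxOn id measurable_id univ x₀ (mem_univ _)
  have hlim := tendsto_probabilityMeasure_map μ (f := fun n => f n) (fun n => (f n).measurable)
    measurable_id fun x => SimpleFunc.tendsto_approxOn measurable_id (mem_univ x₀) (by simp)
  have hid : μ.map measurable_id.aemeasurable = μ := by
    ext1; simp
  rw [hid] at hlim
  refine mem_closure_of_tendsto hlim (.of_forall fun n => ?_)
  refine mem_concentratedMeasures_of_measure_compl_finset_eq_zero (F := (f n).range) ?_ hs hδ hε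
  rw [ProbabilityMeasure.toMeasure_map, SimpleFunc.coe_range]
  rw [Measure.map_apply (f n).measurable ((f n).finite_range.measurableSet.compl)]
  simp [preimage_compl, preimage_range]

/-- The measures for which finitely many closed sets of small mass cover the space. -/
def diffuseMeasures (X : Type*) [MetricSpace X] [MeasurableSpace X] (ε : ℝ≥0∞) :
    Set (ProbabilityMeasure X) :=
  {μ | ∃ C : Set (Set X), C.Finite ∧ (∀ K ∈ C, IsClosed K ∧ (μ : Measure X) K < ε) ∧
    ⋃₀ C = univ}

theorem isOpen_diffuseMeasures (ε : ℝ≥0∞) : IsOpen (diffuseMeasures X ε) := by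
  refine isOpen_iff_eventually.2 fun μ ⟨C, hC, h, hU⟩ => ?_
  have h' := (Filter.eventually_all_finite hC).2 fun K hK =>
    (isOpen_setOf_measure_lt_of_isClosed (h K hK).1 ε).eventually_mem (h K hK).2
  filter_upwards [h'] with ν hν
  exact ⟨C, hC, fun K hK => ⟨(h K hK).1, hν K hK⟩, hU⟩

end WeakTopology

theorem mem_diffuseMeasures_of_nullSingletonClass {X : Type*} [MetricSpace X] [MeasurableSpace X]
    [BorelSpace X] [CompactSpace X] (μ : ProbabilityMeasure X) [NullSingletonClass (μ : Measure X)]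
    {ε : ℝ≥0∞} (hε : 0 < ε) : μ ∈ diffuseMeasures X ε := by
  have key : ∀ x : X, ∃ r > 0, (μ : Measure X) (closedBall x r) < ε := by
    intro x
    have h := tendsto_measure_cthickening_of_isClosed (μ := (μ : Measure X)) (s := {x})
      ⟨1, one_pos, measure_ne_top _ _⟩ isClosed_singleton
    rw [measure_singleton] at h
    obtain ⟨r, hr, hr0⟩ := (((h.mono_left nhdsWithin_le_nhds).eventually_lt_const hε).and
      (self_mem_nhdsWithin (s := Ioi (0 : ℝ)))).exists
    exact ⟨r, hr0, by rwa [cthickening_singleton _ (le_of_lt hr0)] at hr⟩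
  choose r hr hμ using key
  obtain ⟨t, ht⟩ := isCompact_univ.elim_nhds_subcover (fun x => closedBall x (r x))
    fun x _ => closedBall_mem_nhds x (hr x)
  refine ⟨(fun x => closedBall x (r x)) '' t, t.finite_toSet.image _, ?_, ?_⟩
  · rintro _ ⟨x, -, rfl⟩
    exact ⟨isClosed_closedBall, hμ x⟩
  · rw [sUnion_image]
    exact univ_subset_iff.1 ht.2

theorem nullSingletonClass_of_forall_mem_diffuseMeasures {X : Type*} [MetricSpace X]
    [MeasurableSpace X] {μ : ProbabilityMeasure X} {ε : ℕ → ℝ≥0∞} (hε : Tendsto ε atTop (𝓝 0))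
    (h : ∀ n, μ ∈ diffuseMeasures X (ε n)) : NullSingletonClass (μ : Measure X) := by
  refine ⟨fun x => le_antisymm (ge_of_tendsto' hε fun n => ?_) bot_le⟩
  obtain ⟨C, -, hC, hU⟩ := h n
  obtain ⟨K, hK, hxK⟩ := mem_sUnion.1 (hU ▸ mem_univ x)
  exact (measure_mono (singleton_subset_iff.2 hxK)).trans (hC K hK).2.le

/-! ### Local dimension -/

theorem log_div_log_lt_iff {m : ℝ≥0∞} (hm : m ≠ ∞) {r : ℝ} (hr : r ∈ Ioo 0 1) (s : ℝ) :
    ENNReal.log m / (Real.log r : EReal) < (s : EReal) ↔ ENNReal.ofReal r ^ s < m := by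
  have hlog : Real.log r < 0 := Real.log_neg hr.1 hr.2
  rcases eq_or_ne m 0 with rfl | hm0
  · simp [EReal.bot_div_of_neg_ne_bot (EReal.coe_neg'.2 hlog) (EReal.coe_ne_bot _)]
  · have hpos : 0 < m.toReal := ENNReal.toReal_pos hm0 hm
    rw [ENNReal.log_pos_real hm0 hm, ← EReal.coe_div, EReal.coe_lt_coe_iff,
      div_lt_iff_of_neg hlog, ← Real.log_rpow hr.1, Real.log_lt_log_iff (Real.rpow_pos_of_pos hr.1 _)
      hpos, ENNReal.ofReal_rpow_of_pos hr.1, ENNReal.ofReal_lt_iff_lt_toReal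
      (Real.rpow_nonneg hr.1.le _) hm]

theorem eventually_mem_Ioo_zero_one : ∀ᶠ r : ℝ in 𝓝[>] 0, r ∈ Ioo (0 : ℝ) 1 :=
  Ioo_mem_nhdsGT one_pos

theorem locDim_nonneg {d : ℕ} (μ : Measure (Cube d)) [IsProbabilityMeasure μ] (x : Cube d) :
    0 ≤ locDim μ x := by
  refine le_liminf_of_le (by isBoundedDefault) ?_
  filter_upwards [eventually_mem_Ioo_zero_one] with r hr
  refine not_lt.1 fun h => ?_
  have := (log_div_log_lt_iff (measure_ne_top μ _) hr 0).1 h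
  rw [ENNReal.rpow_zero] at this
  exact this.not_ge prob_le_one

theorem locDim_le_of_frequently {d : ℕ} {μ : Measure (Cube d)} [IsFiniteMeasure μ] {x : Cube d}
    {s : ℝ} (h : ∃ᶠ r in 𝓝[>] (0 : ℝ), ENNReal.ofReal r ^ s < μ (ball x r)) :
    locDim μ x ≤ (s : EReal) := by
  refine liminf_le_of_frequently_le ?_ (by isBoundedDefault)
  refine (h.and_eventually eventually_mem_Ioo_zero_one).mono fun r hr => ?_
  exact ((log_div_log_lt_iff (measure_ne_top μ _) hr.2 s).2 hr.1).le

theorem frequently_lt_measure_ball {d : ℕ} {μ : Measure (Cube d)} [IsFiniteMeasure μ]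
    {x : Cube d} {s : ℝ} (h : locDim μ x < (s : EReal)) :
    ∃ᶠ r in 𝓝[>] (0 : ℝ), ENNReal.ofReal r ^ s < μ (ball x r) := by
  have h' := frequently_lt_of_liminf_lt (by isBoundedDefault) h
  refine (h'.and_eventually eventually_mem_Ioo_zero_one).mono fun r hr => ?_
  exact (log_div_log_lt_iff (measure_ne_top μ _) hr.2 s).1 hr.1

/-! ### Sets of points with many heavy balls -/

section Covering

variable {X : Type*} [MetricSpace X] [SecondCountableTopology X] [MeasurableSpace X] [BorelSpace X]

theorem exists_countable_cover_of_lt_measure_closedBall (μ : Measure X) [IsProbabilityMeasure μ]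
    {r : ℝ} (hr : 0 < r) (c : ℝ≥0∞) :
    ∃ u : Set X, u.Countable ∧ {x | c < μ (closedBall x r)} ⊆ ⋃ x ∈ u, closedBall x (4 * r) ∧
      ∑' _ : u, c ≤ 1 := by
  obtain ⟨u, hu, hdisj, hcov⟩ := Vitali.exists_disjoint_subfamily_covering_enlargement_closedBall
    {x | c < μ (closedBall x r)} id (fun _ => r) r (fun _ _ => le_rfl) 4 (by norm_num)
  have hcount : u.Countable := hdisj.countable_of_nonempty_interior fun x _ =>
    ⟨x, ball_subset_interior_closedBall (mem_ball_self hr)⟩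
  refine ⟨u, hcount, fun x hx => ?_, ?_⟩
  · obtain ⟨b, hb, hsub⟩ := hcov x hx
    exact mem_biUnion hb (hsub (mem_closedBall_self hr.le))
  · have := hcount.to_subtype
    calc ∑' _ : u, c ≤ ∑' x : u, μ (closedBall (x : X) r) :=
          ENNReal.tsum_le_tsum fun x => (hu x.2).le
      _ = μ (⋃ x : u, closedBall (x : X) r) :=
          (measure_iUnion (f := fun x : u => closedBall (x : X) r)
            (fun x y hxy => hdisj x.2 y.2 (Subtype.coe_ne_coe.2 hxy))
            fun x => isClosed_closedBall.measurableSet).symm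
      _ ≤ 1 := prob_le_one

theorem frequently_lt_measure_closedBall_two_pow {X : Type*} [MetricSpace X]
    [MeasurableSpace X] {μ : Measure X} {x : X} {s : ℝ} (hs : 0 < s)
    (h : ∃ᶠ r in 𝓝[>] (0 : ℝ), ENNReal.ofReal r ^ s < μ (ball x r)) :
    ∃ᶠ n : ℕ in atTop,
      ENNReal.ofReal ((2⁻¹ : ℝ) ^ (n + 1)) ^ s < μ (closedBall x ((2⁻¹ : ℝ) ^ n)) := by
  rw [frequently_atTop]
  intro m
  obtain ⟨r, hr, hr0, hrm⟩ := (h.and_eventually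
    (Ioo_mem_nhdsGT (show (0 : ℝ) < 2⁻¹ ^ m by positivity))).exists
  have hr1 : r ≤ 1 := hrm.le.trans (pow_le_one₀ (by norm_num) (by norm_num))
  obtain ⟨n, hn1, hn2⟩ := exists_nat_pow_near_of_lt_one hr0 hr1
    (show (0 : ℝ) < 2⁻¹ by norm_num) (by norm_num)
  have hmn : m < n + 1 := (pow_lt_pow_iff_right_of_lt_one₀ (by norm_num) (by norm_num)).1
    (hn1.trans hrm)
  refine ⟨n, by omega, ?_⟩
  calc ENNReal.ofReal ((2⁻¹ : ℝ) ^ (n + 1)) ^ s ≤ ENNReal.ofReal r ^ s := by gcongr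
    _ < μ (ball x r) := hr
    _ ≤ _ := measure_mono (ball_subset_closedBall.trans (closedBall_subset_closedBall hn2))

theorem hausdorffMeasure_setOf_frequently_lt_measure_closedBall_eq_zero (μ : Measure X)
    [IsProbabilityMeasure μ] {s : ℝ} (hs : 0 < s) :
    μH[2 * s] {x | ∃ᶠ n : ℕ in atTop,
      ENNReal.ofReal ((2⁻¹ : ℝ) ^ (n + 1)) ^ s < μ (closedBall x ((2⁻¹ : ℝ) ^ n))} = 0 := by
  choose u hcount hcov hsum using fun n : ℕ =>
    exists_countable_cover_of_lt_measure_closedBall μ (show (0 : ℝ) < 2⁻¹ ^ n by positivity)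
      (ENNReal.ofReal ((2⁻¹ : ℝ) ^ (n + 1)) ^ s)
  have hc : ∀ n, Countable (u n) := fun n => (hcount n).to_subtype
  have hd : ∀ (n : ℕ) (x : X),
      ediam (closedBall x (4 * 2⁻¹ ^ n)) ≤ ENNReal.ofReal (8 * 2⁻¹ ^ n) := by
    refine fun n x => ediam_le_of_forall_dist_le fun y hy z hz => ?_
    have := dist_triangle_right y z x
    rw [mem_closedBall] at hy hz
    linarith
  -- the total `2 s`-dimensional size of the covering balls at level `n` decays geometrically
  let a : ℕ → ℝ≥0∞ := fun n => ENNReal.ofReal (128 * 2⁻¹ ^ n) ^ s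
  have ha : ∀ n, ∑' x : u n, ediam (closedBall (x : X) (4 * 2⁻¹ ^ n)) ^ (2 * s) ≤ a n := by
    intro n
    calc ∑' x : u n, ediam (closedBall (x : X) (4 * 2⁻¹ ^ n)) ^ (2 * s)
        ≤ ∑' x : u n, a n * ENNReal.ofReal ((2⁻¹ : ℝ) ^ (n + 1)) ^ s := by
          refine ENNReal.tsum_le_tsum fun x => ?_
          rw [← ENNReal.mul_rpow_of_nonneg _ _ hs.le, ENNReal.rpow_mul,
            ← ENNReal.ofReal_mul (by positivity)]
          refine ENNReal.rpow_le_rpow ?_ hs.le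
          rw [ENNReal.rpow_two]
          calc _ ≤ ENNReal.ofReal (8 * 2⁻¹ ^ n) ^ 2 := by gcongr; exact hd n x
            _ = _ := by
              rw [← ENNReal.ofReal_pow (by positivity)]
              congr 1
              ring
      _ = a n * ∑' x : u n, ENNReal.ofReal ((2⁻¹ : ℝ) ^ (n + 1)) ^ s := ENNReal.tsum_mul_left
      _ ≤ a n * 1 := by gcongr; exact hsum n
      _ = a n := mul_one _
  have hasum : ∑' n, a n ≠ ∞ := by
    have h1 : ∀ n, a n = ENNReal.ofReal (128 ^ s * ((2⁻¹ : ℝ) ^ s) ^ n) := by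
      intro n
      simp only [a]
      rw [ENNReal.ofReal_rpow_of_nonneg (by positivity) hs.le, Real.mul_rpow (by norm_num)
        (by positivity), ← Real.rpow_natCast, ← Real.rpow_natCast, ← Real.rpow_mul (by norm_num),
        ← Real.rpow_mul (by norm_num), mul_comm s]
    simp_rw [h1]
    exact (Summable.mul_left _ (summable_geometric_of_lt_one (by positivity)
      (Real.rpow_lt_one (by norm_num) (by norm_num) hs))).tsum_ofReal_ne_top
  have hle := Measure.hausdorffMeasure_le_liminf_tsum (ι := fun m => Σ n : ℕ, u (n + m))
    (l := atTop) (2 * s) {x | ∃ᶠ n : ℕ in atTop,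
      ENNReal.ofReal ((2⁻¹ : ℝ) ^ (n + 1)) ^ s < μ (closedBall x ((2⁻¹ : ℝ) ^ n))}
    (fun m => ENNReal.ofReal (8 * 2⁻¹ ^ m)) ?_
    (fun m i => closedBall (i.2 : X) (4 * 2⁻¹ ^ (i.1 + m))) (.of_forall fun m i => ?_)
    (.of_forall fun m x hx => ?_)
  · refine le_antisymm (hle.trans ?_) bot_le
    rw [← (ENNReal.tendsto_sum_nat_add a hasum).liminf_eq]
    refine liminf_le_liminf (.of_forall fun m => ?_)
    rw [ENNReal.tsum_sigma']
    exact ENNReal.tsum_le_tsum fun n => ha (n + m)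
  · have : Tendsto (fun m : ℕ => (8 * 2⁻¹ ^ m : ℝ)) atTop (𝓝 (8 * 0)) :=
      (tendsto_pow_atTop_nhds_zero_of_lt_one (by norm_num) (by norm_num)).const_mul _
    simpa using ENNReal.tendsto_ofReal this
  · refine (hd _ _).trans (ENNReal.ofReal_le_ofReal ?_)
    gcongr 8 * ?_
    exact pow_le_pow_of_le_one (by norm_num) (by norm_num) (Nat.le_add_left m i.1)
  · obtain ⟨n, hmn, hn⟩ := (frequently_atTop.1 hx) m
    obtain ⟨y, hy, hxy⟩ := mem_iUnion₂.1 (hcov n hn)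
    obtain ⟨k, rfl⟩ := Nat.exists_eq_add_of_le' hmn
    exact mem_iUnion.2 ⟨⟨k, y, hy⟩, hxy⟩

end Covering

theorem dimH_levelSet_zero {d : ℕ} (μ : Measure (Cube d)) [IsProbabilityMeasure μ] :
    dimH (levelSet μ 0) = 0 := by
  refine le_antisymm (ENNReal.le_of_forall_pos_le_add fun ε hε _ => ?_) bot_le
  rw [zero_add]
  refine dimH_le_of_hausdorffMeasure_ne_top ?_
  have hs : (0 : ℝ) < ε / 2 := by positivity
  have h := hausdorffMeasure_setOf_frequently_lt_measure_closedBall_eq_zero μ hs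
  rw [mul_div_cancel₀ _ two_ne_zero] at h
  refine ne_top_of_le_ne_top ENNReal.zero_ne_top ((measure_mono fun x hx => ?_).trans h.le)
  refine frequently_lt_measure_closedBall_two_pow hs (frequently_lt_measure_ball ?_)
  rw [show locDim μ x = ((0 : ℝ) : EReal) from hx]
  exact EReal.coe_lt_coe_iff.2 hs

/-! ### Density of atomless measures on the cube -/

/-- Move the point `x` of the cube towards the diagonal point `(t, …, t)` by the ratio `a`. -/
def moveToDiagonal (d : ℕ) (a : unitInterval) (p : Cube d × unitInterval) : Cube d :=
  ⟨fun i => (1 - a) * (p.1 : Fin d → ℝ) i + a * p.2, by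
    have hx := fun i => p.1.2.1 i
    have hx' := fun i => p.1.2.2 i
    simp only [Pi.zero_apply, Pi.one_apply] at hx hx'
    have h₀ := a.2.1
    have h₁ := sub_nonneg.2 a.2.2
    have ht := p.2.2.1
    have ht' := p.2.2.2
    refine ⟨fun i => ?_, fun i => ?_⟩
    · have := hx i
      simp only [Pi.zero_apply]
      positivity
    · have := mul_le_mul_of_nonneg_left (hx' i) h₁
      have := mul_le_mul_of_nonneg_left ht' h₀
      simp only [Pi.one_apply]
      linarith⟩

theorem continuous_moveToDiagonal (d : ℕ) (p : Cube d × unitInterval) :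
    Continuous fun a => moveToDiagonal d a p := by
  unfold moveToDiagonal
  fun_prop

theorem measurable_moveToDiagonal (d : ℕ) (a : unitInterval) :
    Measurable (moveToDiagonal d a) := by
  have : Continuous (moveToDiagonal d a) := by
    refine Continuous.subtype_mk (continuous_pi fun i => ?_) _
    exact (continuous_const.mul ((continuous_apply i).comp
      (continuous_subtype_val.comp continuous_fst))).add
        (continuous_const.mul (continuous_subtype_val.comp continuous_snd))
  exact this.measurable

theorem injective_moveToDiagonal {d : ℕ} (hd : 1 ≤ d) {a : unitInterval} (ha : a ≠ 0)
    (x : Cube d) : Function.Injective fun t => moveToDiagonal d a (x, t) := by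
  intro t t' h
  have h' := congrFun (congrArg Subtype.val h) ⟨0, hd⟩
  have ha' : (a : ℝ) ≠ 0 := fun h => ha (Subtype.ext h)
  simpa [moveToDiagonal, ha', Subtype.ext_iff] using h'

theorem nullSingletonClass_map_moveToDiagonal {d : ℕ} (hd : 1 ≤ d) {a : unitInterval}
    (ha : a ≠ 0) (μ : Measure (Cube d)) [SFinite μ] :
    NullSingletonClass ((μ.prod (volume : Measure unitInterval)).map (moveToDiagonal d a)) := by
  refine ⟨fun y => ?_⟩
  have hm := measurable_moveToDiagonal d a
  rw [Measure.map_apply hm (measurableSet_singleton y),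
    Measure.prod_apply (hm (measurableSet_singleton y))]
  refine (lintegral_congr fun x => ?_).trans lintegral_zero
  exact (subsingleton_singleton.preimage (injective_moveToDiagonal hd ha x)).measure_zero _

theorem dense_diffuseMeasures_cube {d : ℕ} (hd : 1 ≤ d) {ε : ℝ≥0∞} (hε : 0 < ε) :
    Dense (diffuseMeasures (Cube d) ε) := by
  intro μ
  let P : ProbabilityMeasure (Cube d × unitInterval) :=
    ⟨(μ : Measure (Cube d)).prod volume, inferInstance⟩
  let a : ℕ → unitInterval := fun n => ⟨1 / ((n : ℝ) + 1), by positivity,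
    div_le_one_of_le₀ (by linarith [n.cast_nonneg (α := ℝ)]) (by positivity)⟩
  have ha : Tendsto a atTop (𝓝 0) :=
    tendsto_subtype_rng.2 tendsto_one_div_add_atTop_nhds_zero_nat
  have ha₀ : ∀ n, a n ≠ 0 := fun n h =>
    (Nat.one_div_pos_of_nat (α := ℝ) (n := n)).ne' (congrArg Subtype.val h)
  have hlim := tendsto_probabilityMeasure_map P (fun n => measurable_moveToDiagonal d (a n))
    (measurable_moveToDiagonal d 0) fun p => ((continuous_moveToDiagonal d p).tendsto 0).comp ha
  have hμ : P.map (measurable_moveToDiagonal d 0).aemeasurable = μ := by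
    have h : moveToDiagonal d 0 = Prod.fst := by
      ext p i
      simp [moveToDiagonal]
    refine Subtype.ext ?_
    rw [ProbabilityMeasure.val_eq_to_measure, ProbabilityMeasure.toMeasure_map, h]
    exact Measure.map_fst_prod.trans (by simp)
  rw [hμ] at hlim
  refine mem_closure_of_tendsto hlim (.of_forall fun n => ?_)
  have : NullSingletonClass
      (P.map (measurable_moveToDiagonal d (a n)).aemeasurable : Measure (Cube d)) :=
    nullSingletonClass_map_moveToDiagonal hd (ha₀ n) (μ : Measure (Cube d))
  exact mem_diffuseMeasures_of_nullSingletonClass _ hε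

/-! ### The level set of a typical measure -/

theorem ae_mem_levelSet_zero {d : ℕ} {μ : ProbabilityMeasure (Cube d)}
    (h : ∀ n : ℕ, μ ∈ concentratedMeasures (Cube d) (1 / ((n : ℝ) + 1)) (1 / ((n : ℝ) + 1))
      ((2⁻¹ : ℝ≥0∞) ^ n)) :
    ∀ᵐ x ∂(μ : Measure (Cube d)), x ∈ levelSet (μ : Measure (Cube d)) 0 := by
  choose F r hr hball hcompl using h
  have hBC := ae_eventually_notMem (μ := (μ : Measure (Cube d)))
    (s := fun n => (⋃ x ∈ F n, ball x (r n / 2))ᶜ)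
    (ne_top_of_le_ne_top (by simp [ENNReal.tsum_geometric])
      (ENNReal.tsum_le_tsum fun n => (hcompl n).le))
  have hr₀ : Tendsto r atTop (𝓝[>] 0) := tendsto_nhdsWithin_iff.2
    ⟨squeeze_zero (fun n => (hr n).1.le) (fun n => (hr n).2.le)
      tendsto_one_div_add_atTop_nhds_zero_nat, .of_forall fun n => (hr n).1⟩
  filter_upwards [hBC] with x hx
  have hx' : ∀ᶠ n in atTop,
      ENNReal.ofReal (r n) ^ (1 / ((n : ℝ) + 1)) < (μ : Measure (Cube d)) (ball x (r n)) := by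
    filter_upwards [hx] with n hn
    obtain ⟨y, hy, hxy⟩ := mem_iUnion₂.1 (not_notMem.1 hn)
    refine (hball n y hy).trans_le (measure_mono (ball_subset_ball' ?_))
    rw [mem_ball, dist_comm] at hxy
    linarith
  refine le_antisymm (EReal.le_of_forall_lt_iff_le.1 fun s hs => ?_) (locDim_nonneg _ x)
  have hs' : 0 < s := EReal.coe_pos.1 hs
  refine locDim_le_of_frequently (hr₀.frequently (Eventually.frequently ?_))
  filter_upwards [hx', (tendsto_one_div_add_atTop_nhds_zero_nat (𝕜 := ℝ)).eventually_lt_const hs']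
    with n hn hns
  refine (ENNReal.rpow_le_rpow_of_exponent_ge ?_ hns.le).trans_lt hn
  refine ENNReal.ofReal_le_one.2 ((hr n).2.le.trans ?_)
  exact div_le_one_of_le₀ (by linarith [n.cast_nonneg (α := ℝ)]) (by positivity)

/-- There is a dense `Gδ` set `R` of probability measures on `[0,1]^d`
(with the weak topology) such that for every `μ ∈ R`, the level set `E_μ(0)` is uncountable
and has Hausdorff dimension `0`. -/
theorem typical_measures_levelSet_zero (d : ℕ) (hd : 1 ≤ d) :
    ∃ R : Set (ProbabilityMeasure (Cube d)), IsGδ R ∧ Dense R ∧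
      ∀ μ ∈ R, ¬ (levelSet (μ : Measure (Cube d)) 0).Countable ∧
        dimH (levelSet (μ : Measure (Cube d)) 0) = 0 := by
  let U : ℕ → Set (ProbabilityMeasure (Cube d)) := fun n =>
    concentratedMeasures (Cube d) (1 / ((n : ℝ) + 1)) (1 / ((n : ℝ) + 1)) ((2⁻¹ : ℝ≥0∞) ^ n)
  let V : ℕ → Set (ProbabilityMeasure (Cube d)) := fun n =>
    diffuseMeasures (Cube d) ((2⁻¹ : ℝ≥0∞) ^ n)
  have hUo : ∀ n, IsOpen (U n) := fun n => isOpen_concentratedMeasures _ _ _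
  have hVo : ∀ n, IsOpen (V n) := fun n => isOpen_diffuseMeasures _
  have hε : ∀ n : ℕ, 0 < (2⁻¹ : ℝ≥0∞) ^ n := fun n => ENNReal.pow_pos (by simp) n
  have hUd : ∀ n, Dense (U n) := fun n =>
    dense_concentratedMeasures Nat.one_div_pos_of_nat Nat.one_div_pos_of_nat (hε n)
  have hVd : ∀ n, Dense (V n) := fun n => dense_diffuseMeasures_cube hd (hε n)
  have hUG : IsGδ (⋂ n, U n) := .iInter_of_isOpen hUo
  have hVG : IsGδ (⋂ n, V n) := .iInter_of_isOpen hVo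
  refine ⟨(⋂ n, U n) ∩ ⋂ n, V n, hUG.inter hVG,
    (dense_iInter_of_isOpen hUo hUd).inter_of_Gδ hUG hVG (dense_iInter_of_isOpen hVo hVd),
    fun μ hμ => ⟨fun hcount => ?_, dimH_levelSet_zero _⟩⟩
  have : NullSingletonClass (μ : Measure (Cube d)) :=
    nullSingletonClass_of_forall_mem_diffuseMeasures
      (ENNReal.tendsto_pow_atTop_nhds_zero_of_lt_one (by simp)) (mem_iInter.1 hμ.2)
  obtain ⟨x, hx, hx'⟩ := ((ae_mem_levelSet_zero (mem_iInter.1 hμ.1)).and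
    (hcount.ae_notMem (μ : Measure (Cube d)))).exists
  exact hx' hx
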